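/- arXiv:2601.00486 — 3 statements merged into one kernel-verified Lean document; each statement's English description precedes it below -/
import Mathlib

section
/- Let F : (ℤ → ℤ) → (ℤ → ℤ) be the cellular automaton global map induced by the local function f(u,v) = 2 − (u+v−3)(u·v − u − v) (the rule of semigroup G₅). Suppose x : ℤ → ℤ satisfies x(i) ∈ {0,1,2} for all i ∈ ℤ. Then for every n ≥ 1 and every i ∈ ℤ, [F^[n] x] i = 1 + ∏_{j=0}^{n} (x(i+j)² − 3·x(i+j) + 1)^{C(n,j)} − ∏_{j=0}^{n} x(i+j)·(2 − x(i+j)), where C(n,j) is the binomial coefficient n choose j. -/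
/-!
Under the local rule, `{0, 1, 2}` is the group `{2, 0}` of order two (with neutral element `2`) with
a new identity `1` adjoined. Its elements are separated by two multiplicative characters: the sign
`0 ↦ -1`, `1, 2 ↦ 1` and the indicator of `1`. A character turns the automaton into
`x i ↦ x i * x (i + 1)`, whose iterates are products with binomial exponents by Pascal's rule, and
each state is recovered as `u = 1 + sign u - indicator u`. The exponents are redundant for the
indicator, which is idempotent; and `u ^ 2 - 3 * u + 1` may replace the sign, which is its negative,
because the exponents have the even sum `2 ^ n`.
-/

open Finset

section BinomialExponents

variable {M : Type*}

theorem prod_pow_choose_of_isIdempotentElem [CommMonoid M] {a : ℕ → M}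
    (ha : ∀ j, IsIdempotentElem (a j)) (n : ℕ) :
    ∏ j ∈ range (n + 1), a j ^ n.choose j = ∏ j ∈ range (n + 1), a j :=
  prod_congr rfl fun j hj ↦
    (ha j).pow_eq (Nat.choose_pos (mem_range_succ_iff.mp hj)).ne'

theorem prod_neg_pow_choose [CommMonoid M] [HasDistribNeg M] {n : ℕ} (hn : n ≠ 0) (a : ℕ → M) :
    ∏ j ∈ range (n + 1), (-a j) ^ n.choose j = ∏ j ∈ range (n + 1), a j ^ n.choose j := by
  have even_sum : Even (∑ j ∈ range (n + 1), n.choose j) := by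
    rw [Nat.sum_range_choose]
    exact even_two.pow_of_ne_zero hn
  simp_rw [neg_pow (a _)]
  rw [prod_mul_distrib, prod_pow_eq_pow_sum, even_sum.neg_one_pow, one_mul]

end BinomialExponents

section GlobalMap

variable {A ι M : Type*}

/-- The global map of the one-sided radius-one cellular automaton with local function `f`. Cells are
indexed by any type in which `i + 1` makes sense, `ℤ` being the case of interest. -/
def globalMap [Add ι] [One ι] (f : A → A → A) (x : ι → A) (i : ι) : A :=
  f (x i) (x (i + 1))

theorem map_iterate_globalMap_eq_prod_pow_choose [AddMonoidWithOne ι] [CommMonoid M]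
    {f : A → A → A} {S : Set A} {χ : A → M}
    (hS : ∀ u ∈ S, ∀ v ∈ S, f u v ∈ S) (hχ : ∀ u ∈ S, ∀ v ∈ S, χ (f u v) = χ u * χ v)
    {x : ι → A} (hx : ∀ i, x i ∈ S) (n : ℕ) (i : ι) :
    χ ((globalMap f)^[n] x i) = ∏ j ∈ range (n + 1), χ (x (i + j)) ^ n.choose j := by
  induction n generalizing x with
  | zero => simp
  | succ n ih =>
    have step_mem (k : ι) : globalMap f x k ∈ S := hS _ (hx k) _ (hx (k + 1))
    have map_step (j : ℕ) :
        χ (globalMap f x (i + j)) = χ (x (i + j)) * χ (x (i + (j + 1 : ℕ))) := by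
      rw [globalMap, hχ _ (hx _) _ (hx _), Nat.cast_succ, add_assoc]
    rw [Function.iterate_succ_apply, ih step_mem]
    simp_rw [map_step, mul_pow]
    rw [prod_mul_distrib, prod_pow_choose_succ fun j _ ↦ χ (x (i + j))]

end GlobalMap

section RuleG₅

/-- The local function of the semigroup `G₅`, as an integer polynomial. -/
def ruleG₅ (u v : ℤ) : ℤ :=
  2 - (u + v - 3) * (u * v - u - v)

/-- The character of `G₅` with values `-1, 1, 1` at `0, 1, 2`, as an integer polynomial. -/
def signG₅ (u : ℤ) : ℤ :=
  -(u ^ 2 - 3 * u + 1)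

/-- The indicator of the identity `1` of `G₅`, which is a character because the other two elements
form an ideal. It is encoded as an integer polynomial with values `0, 1, 0` at `0, 1, 2`. -/
def indicatorOneG₅ (u : ℤ) : ℤ :=
  u * (2 - u)

theorem one_add_signG₅_sub_indicatorOneG₅ (u : ℤ) : 1 + signG₅ u - indicatorOneG₅ u = u := by
  unfold signG₅ indicatorOneG₅
  ring

theorem ruleG₅_mem : ∀ u ∈ ({0, 1, 2} : Set ℤ), ∀ v ∈ ({0, 1, 2} : Set ℤ),
    ruleG₅ u v ∈ ({0, 1, 2} : Set ℤ) := by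
  rintro _ (rfl | rfl | rfl) _ (rfl | rfl | rfl) <;> simp [ruleG₅]

theorem signG₅_ruleG₅ : ∀ u ∈ ({0, 1, 2} : Set ℤ), ∀ v ∈ ({0, 1, 2} : Set ℤ),
    signG₅ (ruleG₅ u v) = signG₅ u * signG₅ v := by
  rintro _ (rfl | rfl | rfl) _ (rfl | rfl | rfl) <;> rfl

theorem indicatorOneG₅_ruleG₅ : ∀ u ∈ ({0, 1, 2} : Set ℤ), ∀ v ∈ ({0, 1, 2} : Set ℤ),
    indicatorOneG₅ (ruleG₅ u v) = indicatorOneG₅ u * indicatorOneG₅ v := by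
  rintro _ (rfl | rfl | rfl) _ (rfl | rfl | rfl) <;> rfl

theorem isIdempotentElem_indicatorOneG₅ {u : ℤ} (hu : u ∈ ({0, 1, 2} : Set ℤ)) :
    IsIdempotentElem (indicatorOneG₅ u) := by
  rcases hu with rfl | rfl | rfl <;> rfl

end RuleG₅

/-- Rule G₅. -/
theorem stmt_6 (F : (ℤ → ℤ) → (ℤ → ℤ))
    (hF : ∀ x : ℤ → ℤ, ∀ i : ℤ,
      F x i = 2 - (x i + x (i + 1) - 3) * (x i * x (i + 1) - x i - x (i + 1)))
    (x : ℤ → ℤ) (hx : ∀ i : ℤ, x i ∈ ({0, 1, 2} : Set ℤ)) :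
    ∀ n : ℕ, 1 ≤ n → ∀ i : ℤ,
      F^[n] x i = 1 + (∏ j ∈ Finset.range (n + 1),
          (x (i + j) ^ 2 - 3 * x (i + j) + 1) ^ (n.choose j))
        - ∏ j ∈ Finset.range (n + 1), x (i + j) * (2 - x (i + j)) := by
  intro n hn i
  obtain rfl : F = globalMap ruleG₅ := funext₂ hF
  have sign_iterate : signG₅ ((globalMap ruleG₅)^[n] x i) =
      ∏ j ∈ range (n + 1), (x (i + j) ^ 2 - 3 * x (i + j) + 1) ^ n.choose j :=
    (map_iterate_globalMap_eq_prod_pow_choose ruleG₅_mem signG₅_ruleG₅ hx n i).trans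
      (prod_neg_pow_choose (Nat.one_le_iff_ne_zero.mp hn) _)
  have indicator_iterate : indicatorOneG₅ ((globalMap ruleG₅)^[n] x i) =
      ∏ j ∈ range (n + 1), x (i + j) * (2 - x (i + j)) :=
    (map_iterate_globalMap_eq_prod_pow_choose ruleG₅_mem indicatorOneG₅_ruleG₅ hx n i).trans
      (prod_pow_choose_of_isIdempotentElem (fun _ ↦ isIdempotentElem_indicatorOneG₅ (hx _)) n)
  rw [← sign_iterate, ← indicator_iterate, one_add_signG₅_sub_indicatorOneG₅]
end

section
/- Let F : (ℤ → ℚ) → (ℤ → ℚ) be the cellular automaton global map induced by the local function f(u,v) = (1/4)·u·v·(3−v)·(3−u) (the rule of semigroup G₉). Suppose x : ℤ → ℚ satisfies x(i) ∈ {0,1,2} for all i ∈ ℤ. Then for every n ≥ 1 and every i ∈ ℤ, [F^[n] x] i = ∏_{j=0}^{n} (1/2)·x(i+j)·(3 − x(i+j)). -/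
/-!
The rule factors as `f(u, v) = g(u) g(v)` with `g(u) = u (3 - u) / 2`. The polynomial `g` fixes
every idempotent and sends each of `0, 1, 2` to an idempotent, so it matters only at the first
step; from then on the automaton multiplies neighbouring idempotents, and repeated factors
collapse.
-/

open Finset

section CommMonoid

variable {M ι : Type*} [CommMonoid M]

lemma isIdempotentElem_finset_prod {s : Finset ι} {a : ι → M}
    (ha : ∀ j ∈ s, IsIdempotentElem (a j)) : IsIdempotentElem (∏ j ∈ s, a j) :=
  prod_mul_distrib.symm.trans (prod_congr rfl ha)

lemma prod_range_succ_mul_prod_range_succ_shift {a : ℕ → M} (ha : ∀ j, IsIdempotentElem (a j))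
    (n : ℕ) :
    (∏ j ∈ range (n + 1), a j) * ∏ j ∈ range (n + 1), a (j + 1) = ∏ j ∈ range (n + 2), a j := by
  have overlap : IsIdempotentElem (∏ j ∈ range n, a (j + 1)) :=
    isIdempotentElem_finset_prod fun j _ ↦ ha (j + 1)
  calc
    _ = a 0 * ((∏ j ∈ range n, a (j + 1)) * ∏ j ∈ range n, a (j + 1)) * a (n + 1) := by
      rw [prod_range_succ' a, prod_range_succ (fun j ↦ a (j + 1))]
      ac_rfl
    _ = a 0 * (∏ j ∈ range n, a (j + 1)) * a (n + 1) := by rw [overlap.eq]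
    _ = ∏ j ∈ range (n + 2), a j := by
      rw [prod_range_succ a (n + 1), prod_range_succ' a, mul_comm (a 0)]

variable [AddMonoidWithOne ι]

theorem iterate_eq_prod_range_of_isIdempotentElem {F : (ι → M) → ι → M} {g : M → M}
    (hF : ∀ y i, F y i = g (y i) * g (y (i + 1)))
    (hg : ∀ e, IsIdempotentElem e → g e = e)
    {x : ι → M} (hx : ∀ i, IsIdempotentElem (g (x i))) {n : ℕ} (hn : 1 ≤ n) (i : ι) :
    F^[n] x i = ∏ j ∈ range (n + 1), g (x (i + j)) := by
  induction n, hn using Nat.le_induction generalizing i with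
  | base => simp [hF, prod_range_succ]
  | succ n _ ih =>
    have fixed (k : ι) : g (F^[n] x k) = ∏ j ∈ range (n + 1), g (x (k + j)) := by
      rw [ih]
      exact hg _ (isIdempotentElem_finset_prod fun j _ ↦ hx (k + j))
    have shift (j : ℕ) : i + 1 + (j : ι) = i + ((j + 1 : ℕ) : ι) := by
      rw [add_assoc, add_comm j 1, Nat.cast_add, Nat.cast_one]
    rw [Function.iterate_succ_apply', hF, fixed, fixed]
    simp only [shift]
    exact prod_range_succ_mul_prod_range_succ_shift (fun j ↦ hx (i + j)) n

end CommMonoid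

section CommRing

variable {R : Type*} [CommRing R] [Invertible (2 : R)]

lemma invOf_two_mul_mul_three_sub_of_isIdempotentElem {e : R} (he : IsIdempotentElem e) :
    ⅟2 * e * (3 - e) = e := by
  linear_combination e * invOf_mul_self (2 : R) - ⅟2 * he.eq

lemma isIdempotentElem_invOf_two_mul_mul_three_sub {u : R} (hu : u ∈ ({0, 1, 2} : Set R)) :
    IsIdempotentElem (⅟2 * u * (3 - u)) := by
  have three_sub_one : (3 - 1 : R) = 2 := by norm_num
  have three_sub_two : (3 - 2 : R) = 1 := by norm_num
  rcases hu with rfl | rfl | rfl <;>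
    simp [IsIdempotentElem, three_sub_one, three_sub_two]

theorem stmt_9_general {ι : Type*} [AddMonoidWithOne ι] (F : (ι → R) → ι → R)
    (hF : ∀ y i, F y i = ⅟2 ^ 2 * y i * y (i + 1) * (3 - y (i + 1)) * (3 - y i))
    (x : ι → R) (hx : ∀ i, IsIdempotentElem (⅟2 * x i * (3 - x i))) (n : ℕ) (hn : 1 ≤ n) (i : ι) :
    F^[n] x i = ∏ j ∈ range (n + 1), ⅟2 * x (i + j) * (3 - x (i + j)) :=
  iterate_eq_prod_range_of_isIdempotentElem (g := fun u ↦ ⅟2 * u * (3 - u))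
    (fun y i ↦ by rw [hF]; ring) (fun _ ↦ invOf_two_mul_mul_three_sub_of_isIdempotentElem) hx hn i

end CommRing

/-- Rule G₉: `[F^[n] x] i = ∏_{j=0}^{n} (1/2)·x(i+j)·(3 − x(i+j))`. -/
theorem stmt_9 (F : (ℤ → ℚ) → (ℤ → ℚ))
    (hF : ∀ x : ℤ → ℚ, ∀ i : ℤ,
      F x i = (1 / 4) * x i * x (i + 1) * (3 - x (i + 1)) * (3 - x i))
    (x : ℤ → ℚ) (hx : ∀ i : ℤ, x i ∈ ({0, 1, 2} : Set ℚ)) :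
    ∀ n : ℕ, 1 ≤ n → ∀ i : ℤ,
      F^[n] x i = ∏ j ∈ Finset.range (n + 1), (1 / 2) * x (i + j) * (3 - x (i + j)) := by
  simpa only [invOf_eq_inv, one_div] using stmt_9_general F (fun y i ↦ by rw [hF]; norm_num) x
    fun i ↦ isIdempotentElem_invOf_two_mul_mul_three_sub (hx i)
end

section
/- Let F : (ℤ → ℤ) → (ℤ → ℤ) be the cellular automaton global map induced by the local function f(u,v) = 1 + (v−1)²·(u−1) (the rule of semigroup G₁₆). Suppose x : ℤ → ℤ satisfies x(i) ∈ {0,1,2} for all i ∈ ℤ. Then for every n ∈ ℕ and every i ∈ ℤ, [F^[n] x] i = 1 + (x(i) − 1) · ∏_{j=1}^{n} (x(i+j) − 1)². -/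
/-!
In the centred states `y = x - 1 ∈ {-1, 0, 1}` the rule becomes `y i ↦ y i * y (i + 1) ^ 2`.
Since `y ^ 3 = y`, the squares are idempotent, so repeated factors collapse and the `n`-th iterate
is `y i` times one copy of each of the squares at `i + 1, …, i + n`.
-/

open Finset

section Monoid

variable {M : Type*} [Monoid M] {a : M} {k : ℕ}

theorem isIdempotentElem_pow_of_pow_succ_eq (h : a ^ (k + 1) = a) : IsIdempotentElem (a ^ k) := by
  cases k with
  | zero => simpa only [pow_zero] using IsIdempotentElem.one
  | succ k =>
    calc a ^ (k + 1) * a ^ (k + 1) = a ^ (k + 1 + 1) * a ^ k := by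
          rw [← pow_add, ← pow_add]
          congr 1
          omega
      _ = a ^ (k + 1) := by rw [h, ← pow_succ']

theorem pow_pow_self_of_pow_succ_eq (h : a ^ (k + 1) = a) : (a ^ k) ^ k = a ^ k := by
  rcases eq_or_ne k 0 with rfl | hk
  · rw [pow_zero, pow_zero]
  · exact (isIdempotentElem_pow_of_pow_succ_eq h).pow_eq hk

end Monoid

section CommMonoid

variable {ι M : Type*} [CommMonoid M]

theorem isIdempotentElem_prod {s : Finset ι} {e : ι → M} (he : ∀ j ∈ s, IsIdempotentElem (e j)) :
    IsIdempotentElem (∏ j ∈ s, e j) :=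
  prod_induction e IsIdempotentElem (fun _ _ ↦ IsIdempotentElem.mul) .one he

theorem prod_Icc_one_succ_bot (f : ℕ → M) (n : ℕ) :
    ∏ j ∈ Icc 1 (n + 1), f j = f 1 * ∏ j ∈ Icc 1 n, f (j + 1) := by
  induction n with
  | zero => simp
  | succ n ih =>
    rw [prod_Icc_succ_top (by omega), ih, prod_Icc_succ_top (by omega), mul_assoc]

/-- The centred form of the automaton: each state is multiplied by the `k`-th power of the state of
its neighbour, where the neighbour of the cell `i` is `σ i`. -/
def mulNeighborPow (σ : ι → ι) (k : ℕ) (y : ι → M) (i : ι) : M :=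
  y i * y (σ i) ^ k

theorem iterate_mulNeighborPow (σ : ι → ι) {k : ℕ} {y : ι → M} (hy : ∀ i, y i ^ (k + 1) = y i)
    (n : ℕ) (i : ι) :
    (mulNeighborPow σ k)^[n] y i = y i * ∏ j ∈ Icc 1 n, y (σ^[j] i) ^ k := by
  induction n generalizing i with
  | zero => simp
  | succ n ih =>
    have hpow : (y (σ i) * ∏ j ∈ Icc 1 n, y (σ^[j] (σ i)) ^ k) ^ k =
        ∏ j ∈ Icc 1 (n + 1), y (σ^[j] i) ^ k := by
      simp only [mul_pow, ← prod_pow, pow_pow_self_of_pow_succ_eq (hy _), prod_Icc_one_succ_bot,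
        Function.iterate_succ_apply, Function.iterate_zero_apply]
    have hidem : IsIdempotentElem (∏ j ∈ Icc 1 n, y (σ^[j] i) ^ k) :=
      isIdempotentElem_prod fun _ _ ↦ isIdempotentElem_pow_of_pow_succ_eq (hy _)
    rw [Function.iterate_succ_apply', mulNeighborPow, ih, ih, hpow,
      prod_Icc_succ_top (by omega), mul_assoc, hidem.mul_self_mul]

end CommMonoid

theorem semiconj_sub_one_mulNeighborPow {ι R : Type*} [CommRing R] {σ : ι → ι} {k : ℕ}
    {F : (ι → R) → (ι → R)} (hF : ∀ x i, F x i = 1 + (x (σ i) - 1) ^ k * (x i - 1)) :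
    Function.Semiconj (fun x ↦ x - 1) F (mulNeighborPow σ k) := by
  intro x
  ext i
  simp only [Pi.sub_apply, Pi.one_apply, mulNeighborPow, hF]
  ring

theorem stmt_16_general {ι R : Type*} [CommRing R] {σ : ι → ι} {k : ℕ} {F : (ι → R) → (ι → R)}
    (hF : ∀ x i, F x i = 1 + (x (σ i) - 1) ^ k * (x i - 1))
    {x : ι → R} (hx : ∀ i, (x i - 1) ^ (k + 1) = x i - 1) (n : ℕ) (i : ι) :
    F^[n] x i = 1 + (x i - 1) * ∏ j ∈ Icc 1 n, (x (σ^[j] i) - 1) ^ k := by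
  have hconj : F^[n] x - 1 = (mulNeighborPow σ k)^[n] (x - 1) :=
    ((semiconj_sub_one_mulNeighborPow hF).iterate_right n).eq x
  have hcentred : F^[n] x i - 1 = (x i - 1) * ∏ j ∈ Icc 1 n, (x (σ^[j] i) - 1) ^ k :=
    (congrFun hconj i).trans (iterate_mulNeighborPow σ hx n i)
  exact eq_add_of_sub_eq' hcentred

theorem sub_one_pow_three_eq_of_mem {R : Type*} [Ring R] {a : R} (ha : a ∈ ({0, 1, 2} : Set R)) :
    (a - 1) ^ 3 = a - 1 := by
  rcases ha with rfl | rfl | rfl <;> norm_num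

/-- Rule G₁₆: `[F^[n] x] i = 1 + (x i − 1) · ∏_{j=1}^{n} (x(i+j) − 1)²`. -/
theorem stmt_16 (F : (ℤ → ℤ) → (ℤ → ℤ))
    (hF : ∀ x : ℤ → ℤ, ∀ i : ℤ, F x i = 1 + (x (i + 1) - 1) ^ 2 * (x i - 1))
    (x : ℤ → ℤ) (hx : ∀ i : ℤ, x i ∈ ({0, 1, 2} : Set ℤ)) :
    ∀ (n : ℕ) (i : ℤ),
      F^[n] x i = 1 + (x i - 1) * ∏ j ∈ Finset.Icc 1 n, (x (i + j) - 1) ^ 2 := by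
  intro n i
  simpa only [add_right_iterate_apply, nsmul_one] using
    stmt_16_general (σ := (· + 1)) hF (fun i ↦ sub_one_pow_three_eq_of_mem (hx i)) n i
end
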